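/- arXiv:2309.02372 — 2 statements merged into one kernel-verified Lean document; each statement's English description precedes it below -/
import Mathlib

section
/- Let R be a commutative noetherian ring, A a finite R-algebra, and M a finitely generated A-module. If the evaluation map M_p → Hom_{(A_p)^op}(Hom_{A_p}(M_p, A_p), A_p) is an isomorphism and the corresponding Ext vanishing holds for all prime ideals p of R, then M is Gorenstein projective over A; conversely if M is Gorenstein projective over A then M_p is Gorenstein projective over A_p for all primes p of R. -/
open CategoryTheory Opposite

/-- Vanishing of `Ext^i_A(M, N)` for left modules over a (possibly noncommutative)
ring `A`, computed in the abelian category of `A`-modules. -/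
noncomputable def extVan (A : Type) [Ring A] (M N : Type) [AddCommGroup M] [Module A M]
    [AddCommGroup N] [Module A N] (i : ℕ) : Prop :=
  Subsingleton ((((Ext ℤ (ModuleCat.{0} A) i).obj (op (ModuleCat.of A M))).obj
    (ModuleCat.of A N)) : Type)

/-- The canonical evaluation (biduality) map `M → Hom_{Aᵒᵖ}(Hom_A(M, A), A)`. -/
def evalBidual (A : Type) [Ring A] (M : Type) [AddCommGroup M] [Module A M] :
    M →ₗ[A] ((M →ₗ[A] A) →ₗ[Aᵐᵒᵖ] A) where
  toFun m :=
    { toFun := fun f => f m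
      map_add' := fun f g => rfl
      map_smul' := fun c f => rfl }
  map_add' m n := by ext f; simp
  map_smul' a m := by ext f; simp

/-- A module `M` over a ring `A` is totally reflexive (finitely generated Gorenstein
projective) if `Ext^i_A(M, A) = 0` and `Ext^i_{Aᵒᵖ}(Hom_A(M, A), A) = 0` for all `i > 0`
and the evaluation map `M → Hom_{Aᵒᵖ}(Hom_A(M, A), A)` is bijective. -/
noncomputable def IsTotallyReflexive (A : Type) [Ring A] (M : Type) [AddCommGroup M]
    [Module A M] : Prop :=
  (∀ i > 0, extVan A M A i) ∧
  (∀ i > 0, extVan Aᵐᵒᵖ (M →ₗ[A] A) A i) ∧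
  Function.Bijective (evalBidual A M)
section Localized

open TensorProduct

variable (R : Type) [CommRing R] (A : Type) [Ring A] [Algebra R A]
  (p : Ideal R) [p.IsPrime]
  (M : Type) [AddCommGroup M] [Module A M] [Module R M] [IsScalarTower R A M]
  [SMulCommClass R A M]

/-- `lTensor` with the localization, as a ring homomorphism on endomorphisms. -/
noncomputable def lTensorRingHom :
    Module.End R M →+* Module.End R (Localization.AtPrime p ⊗[R] M) where
  toFun f := LinearMap.lTensor (Localization.AtPrime p) f
  map_one' := LinearMap.lTensor_id _ _
  map_mul' f g := LinearMap.lTensor_comp _ f g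
  map_zero' := LinearMap.lTensor_zero _
  map_add' := LinearMap.lTensor_add _

/-- The `A`-module structure on `M_p = R_p ⊗_R M` (acting on the second factor). -/
noncomputable instance (priority := 50) locAModule : Module A (Localization.AtPrime p ⊗[R] M) :=
  Module.compHom _ ((lTensorRingHom R p M).comp (Algebra.lsmul R R M).toRingHom)

theorem locA_smul_tmul (a : A) (c : Localization.AtPrime p) (m : M) :
    a • (c ⊗ₜ[R] m) = c ⊗ₜ[R] (a • m) := rfl

noncomputable instance locTower : IsScalarTower R A (Localization.AtPrime p ⊗[R] M) := by
  constructor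
  intro r a x
  induction x using TensorProduct.induction_on with
  | zero => rw [smul_zero, smul_zero]; exact (smul_zero r).symm
  | tmul c m =>
      rw [show (r • a) • (c ⊗ₜ[R] m) = c ⊗ₜ[R] ((r • a) • m) from rfl,
        locA_smul_tmul, smul_assoc, TensorProduct.smul_tmul', ← TensorProduct.smul_tmul]
  | add x y hx hy => rw [smul_add, smul_add, smul_add, hx, hy]

noncomputable instance locComm :
    SMulCommClass (Localization.AtPrime p) A (Localization.AtPrime p ⊗[R] M) := by
  constructor
  intro c a x
  induction x using TensorProduct.induction_on with
  | zero => rw [smul_zero, smul_zero, smul_zero]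
  | tmul d m =>
      rw [locA_smul_tmul, TensorProduct.smul_tmul', TensorProduct.smul_tmul',
        show a • ((c • d) ⊗ₜ[R] m) = (c • d) ⊗ₜ[R] (a • m) from rfl]
  | add x y hx hy => rw [smul_add, smul_add, smul_add, smul_add, hx, hy]

/-- The module structure on `M_p = R_p ⊗_R M` over `A_p = R_p ⊗_R A`. -/
noncomputable instance locModule :
    Module (Localization.AtPrime p ⊗[R] A) (Localization.AtPrime p ⊗[R] M) :=
  @TensorProduct.Algebra.module R (Localization.AtPrime p) A
    (Localization.AtPrime p ⊗[R] M) _ _ _ _ _ TensorProduct.leftModule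
    (locAModule R A p M) _ _ (TensorProduct.isScalarTower_left)
    (locTower R A p M) (locComm R A p M)

end Localized

/-!
Over a noetherian ring a finitely generated module is finitely presented, so for such an `A`-module
`M` the formation of `Hom_A(M, N)` commutes with localization at a multiplicative set of central
scalars. Kernels localize too, so a surjection from a finite free module onto `M` localizes together
with its kernel `K`. By dimension shifting `Ext^1_A(M, N) = 0` says that restriction
`Hom_A(A^n, N) → Hom_A(K, N)` is surjective, while `Ext^{i+2}_A(M, N) = Ext^{i+1}_A(K, N)`.
Surjectivity of a linear map may be checked at the primes of `R`, hence so may the vanishing of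
`Ext^i_A(M, N)` for `i > 0`, by induction on `i`. The dual `Hom_A(M, A)` is finitely generated over
`Aᵐᵒᵖ` and localizes to the dual of the localization of `M`, so the same applies to it; bijectivity
of the biduality map, which is compatible with localization, is likewise checked at the primes.
-/

section ExtVanishing

variable {C : Type*} [Category* C] [Abelian C] {X : C} (Y : C)

theorem ext_succ_subsingleton_iff_of_projectiveResolution (R : Type*) [Ring R] [Linear R C]
    [EnoughProjectives C] (P : ProjectiveResolution X) (n : ℕ) :
    Subsingleton (((Ext R C (n + 1)).obj (op X)).obj Y) ↔
      ∀ f : P.complex.X (n + 1) ⟶ Y, P.complex.d (n + 2) (n + 1) ≫ f = 0 →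
        ∃ g : P.complex.X n ⟶ Y, P.complex.d (n + 1) n ≫ g = f := by
  rw [← ModuleCat.isZero_iff_subsingleton, (P.isoExt (n + 1) Y).isZero_iff,
    ← HomologicalComplex.exactAt_iff_isZero_homology,
    HomologicalComplex.exactAt_iff' _ n (n + 1) (n + 2) (by simp) (by simp),
    ShortComplex.moduleCat_exact_iff]
  rfl

variable [HasExt C]

theorem abelianExt_succ_subsingleton_iff_of_projectiveResolution
    (P : ProjectiveResolution X) (n : ℕ) :
    Subsingleton (Abelian.Ext X Y (n + 1)) ↔
      ∀ f : P.complex.X (n + 1) ⟶ Y, P.complex.d (n + 2) (n + 1) ≫ f = 0 →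
        ∃ g : P.complex.X n ⟶ Y, P.complex.d (n + 1) n ≫ g = f := by
  rw [subsingleton_iff_forall_eq 0]
  refine ⟨fun h f hf => (P.extMk_eq_zero_iff f (n + 2) rfl hf n rfl).1 (h _), fun h α => ?_⟩
  obtain ⟨f, hf, rfl⟩ := P.extMk_surjective α (n + 2) rfl
  exact (P.extMk_eq_zero_iff f (n + 2) rfl hf n rfl).2 (h f hf)

theorem ext_succ_subsingleton_iff_abelianExt (R : Type*) [Ring R] [Linear R C]
    [EnoughProjectives C] (n : ℕ) :
    Subsingleton (((Ext R C (n + 1)).obj (op X)).obj Y) ↔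
      Subsingleton (Abelian.Ext X Y (n + 1)) :=
  (ext_succ_subsingleton_iff_of_projectiveResolution Y R (.of X) n).trans
    (abelianExt_succ_subsingleton_iff_of_projectiveResolution Y (.of X) n).symm

variable {S : ShortComplex C} (hS : S.ShortExact) [Projective S.X₂]
include hS

theorem abelianExt_succ_subsingleton_iff_surjective (n : ℕ) :
    Subsingleton (Abelian.Ext S.X₃ Y (n + 1)) ↔
      Function.Surjective fun α : Abelian.Ext S.X₂ Y n =>
        (Abelian.Ext.mk₀ S.f).comp α (zero_add n) := by
  rw [subsingleton_iff_forall_eq 0]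
  refine ⟨fun h β => Abelian.Ext.contravariant_sequence_exact₁ hS Y β (add_comm 1 n) (h _),
    fun h α => ?_⟩
  obtain ⟨β, rfl⟩ := Abelian.Ext.contravariant_sequence_exact₃ hS Y α
    (Abelian.Ext.eq_zero_of_projective _) (add_comm 1 n)
  obtain ⟨γ, rfl⟩ := h β
  exact hS.extClass_comp_assoc γ

theorem abelianExt_one_subsingleton_iff_extend :
    Subsingleton (Abelian.Ext S.X₃ Y 1) ↔ ∀ f : S.X₁ ⟶ Y, ∃ g : S.X₂ ⟶ Y, S.f ≫ g = f := by
  rw [abelianExt_succ_subsingleton_iff_surjective Y hS 0]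
  simp only [Function.Surjective, Abelian.Ext.addEquiv₀.symm.surjective.forall,
    Abelian.Ext.addEquiv₀.symm.surjective.exists, Abelian.Ext.addEquiv₀_symm_apply,
    Abelian.Ext.mk₀_comp_mk₀, (Abelian.Ext.mk₀_bijective _ _).1.eq_iff]

theorem abelianExt_succ_succ_subsingleton_iff (n : ℕ) :
    Subsingleton (Abelian.Ext S.X₃ Y (n + 2)) ↔ Subsingleton (Abelian.Ext S.X₁ Y (n + 1)) := by
  rw [abelianExt_succ_subsingleton_iff_surjective Y hS (n + 1), subsingleton_iff_forall_eq 0]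
  refine ⟨fun h β => ?_, fun h β => ⟨0, ?_⟩⟩
  · obtain ⟨α, rfl⟩ := h β
    simp [Abelian.Ext.eq_zero_of_projective α]
  · simp [h β]

end ExtVanishing

section DimensionShifting

theorem extVan_succ_iff_abelianExt {A : Type} [Ring A] (M N : Type) [AddCommGroup M] [Module A M]
    [AddCommGroup N] [Module A N] (i : ℕ) :
    extVan A M N (i + 1) ↔
      Subsingleton (Abelian.Ext (ModuleCat.of A M) (ModuleCat.of A N) (i + 1)) :=
  ext_succ_subsingleton_iff_abelianExt _ ℤ i

variable {A : Type} [Ring A] {P M : Type} [AddCommGroup P] [Module A P] [Module.Projective A P]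
  [AddCommGroup M] [Module A M] {ε : P →ₗ[A] M} (hε : Function.Surjective ε)
  (N : Type) [AddCommGroup N] [Module A N]

include hε

theorem extVan_one_iff_surjective :
    extVan A M N 1 ↔
      Function.Surjective fun w : P →ₗ[A] N => w ∘ₗ (LinearMap.ker ε).subtype := by
  rw [extVan_succ_iff_abelianExt,
    abelianExt_one_subsingleton_iff_extend _ (LinearMap.shortExact_shortComplexKer hε),
    ModuleCat.homEquiv.forall_congr_left]
  simp [Function.Surjective, ModuleCat.homEquiv.exists_congr_left, ModuleCat.hom_ext_iff,
    ModuleCat.homEquiv]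

theorem extVan_add_two_iff (i : ℕ) :
    extVan A M N (i + 2) ↔ extVan A (LinearMap.ker ε) N (i + 1) := by
  rw [extVan_succ_iff_abelianExt, extVan_succ_iff_abelianExt,
    abelianExt_succ_succ_subsingleton_iff _ (LinearMap.shortExact_shortComplexKer hε)]

end DimensionShifting

section FiniteModule

variable {R A M N N' : Type*} [CommRing R] (S : Submonoid R) [Ring A] [Algebra R A]
  [AddCommGroup M] [Module A M] [AddCommGroup N] [Module R N] [Module A N] [IsScalarTower R A N]
  [AddCommGroup N'] [Module R N'] (g : N →ₗ[R] N') [IsLocalizedModule S g]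

theorem exists_smul_eq_zero_of_forall_apply_eq_zero [Module.Finite A M] (v : M →ₗ[A] N)
    (hv : ∀ m, g (v m) = 0) : ∃ s : S, s • v = 0 := by
  obtain ⟨n, ε, hε⟩ := Module.Finite.exists_fin' A M
  have := IsLocalizedModule.pi S fun _ : Fin n => g
  obtain ⟨s, hs⟩ := (IsLocalizedModule.eq_zero_iff S
    (LinearMap.pi fun i => g ∘ₗ LinearMap.proj i) (m := fun i => v (ε (Pi.single i 1)))).1
    (funext fun i => hv _)
  exact ⟨s, (LinearMap.cancel_right hε).1 <|
    LinearMap.pi_ext' fun i => LinearMap.ext_ring (congrFun hs i)⟩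

end FiniteModule

theorem isUnit_algebraMap_end_linearMap {R A M N : Type*} [CommRing R] [Ring A] [Algebra R A]
    [AddCommGroup M] [Module A M] [AddCommGroup N] [Module R N] [Module A N] [IsScalarTower R A N]
    {r : R} (hr : IsUnit (algebraMap R (Module.End R N) r)) :
    IsUnit (algebraMap R (Module.End R (M →ₗ[A] N)) r) := by
  have hr : Function.Bijective fun x : N => r • x := (Module.End.isUnit_iff _).1 hr
  refine (Module.End.isUnit_iff _).2 ⟨fun u w h => ?_, fun u => ?_⟩
  · exact LinearMap.ext fun x => hr.1 (LinearMap.congr_fun h x)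
  · let e : N ≃ₗ[A] N := .ofBijective (r • LinearMap.id) hr
    exact ⟨e.symm.toLinearMap ∘ₗ u, LinearMap.ext fun x => e.apply_symm_apply (u x)⟩

section Localization

variable {R A A' M M' N N' : Type*} [CommRing R] (S : Submonoid R) [Ring A] [Algebra R A]
  [Ring A'] [Algebra R A'] (φ : A →ₐ[R] A')
  [AddCommGroup M] [Module R M] [Module A M] [AddCommGroup M'] [Module R M'] [Module A' M']
  [AddCommGroup N] [Module R N] [Module A N] [AddCommGroup N'] [Module R N'] [Module A' N']

/-- The `R`-linear map `f : M → M'` from an `A`-module to an `A'`-module is a localization at the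
submonoid `S` of `R`, and is semilinear along `φ : A → A'`. When `φ` is itself
a localization at `S`, this says that `M'` is the `A'`-module `S⁻¹M`. -/
structure IsLocalizedModuleAlong (f : M →ₗ[R] M') : Prop where
  isLocalizedModule : IsLocalizedModule S f
  apply_smul (a : A) (m : M) : f (a • m) = φ a • f m

section Algebra

variable [IsLocalizedModule S φ.toLinearMap]

instance isLocalizedModule_algHom_op : IsLocalizedModule S (AlgHom.op φ).toLinearMap :=
  IsLocalizedModule.of_linearEquiv S
    (φ.toLinearMap ∘ₗ (MulOpposite.opLinearEquiv R).symm.toLinearMap) (MulOpposite.opLinearEquiv R)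

theorem isLocalizedModuleAlong_self : IsLocalizedModuleAlong S φ φ.toLinearMap :=
  ⟨‹_›, map_mul φ⟩

theorem isLocalizedModuleAlong_op_self :
    IsLocalizedModuleAlong S (AlgHom.op φ) φ.toLinearMap :=
  ⟨‹_›, fun a b => map_mul φ b a.unop⟩

end Algebra

variable {S φ} {f : M →ₗ[R] M'} {g : N →ₗ[R] N'}

section Kernel

variable [IsScalarTower R A M] [IsScalarTower R A' M']
  {v : M →ₗ[A] N} {v' : M' →ₗ[A'] N'} (h : ∀ m, v' (f m) = g (v m))

/-- The map `ker v → ker v'` induced by a commutative square with horizontal sides `v` and `v'`;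
the other sides are only `R`-linear. -/
def kerMap : LinearMap.ker v →ₗ[R] LinearMap.ker v' where
  toFun m := ⟨f m, by simp [h]⟩
  map_add' _ _ := by ext; simp
  map_smul' _ _ := by ext; simp

theorem isLocalizedModuleAlong_kerMap [IsScalarTower R A N] [IsScalarTower R A' N']
    (hf : IsLocalizedModuleAlong S φ f) (hg : IsLocalizedModuleAlong S φ g) :
    IsLocalizedModuleAlong S φ (kerMap h) := by
  have := hf.isLocalizedModule
  have := hg.isLocalizedModule
  have hv' : v'.restrictScalars R = IsLocalizedModule.map S f g (v.restrictScalars R) :=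
    IsLocalizedModule.linearMap_ext S f g (LinearMap.ext fun m => by simp [h])
  have hker := LinearMap.ker_localizedMap_eq_localized₀_ker S f g (v.restrictScalars R)
  rw [← hv'] at hker
  exact ⟨IsLocalizedModule.of_linearEquiv S (Submodule.toLocalized₀ S f _)
    (LinearEquiv.ofEq _ _ hker.symm), fun a m => Subtype.ext (hf.apply_smul a m)⟩

end Kernel

namespace IsLocalizedModuleAlong

variable (hf : IsLocalizedModuleAlong S φ f) (hg : IsLocalizedModuleAlong S φ g)

include hf in
theorem compLeft (ι : Type*) [Finite ι] : IsLocalizedModuleAlong S φ (f.compLeft ι) :=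
  have := hf.isLocalizedModule
  ⟨IsLocalizedModule.pi S fun _ : ι => f, fun a m => funext fun i => hf.apply_smul a (m i)⟩

include hf hg in
theorem linearMap_ext [IsScalarTower R A' M'] [IsScalarTower R A' N']
    {u w : M' →ₗ[A'] N'} (h : ∀ m, u (f m) = w (f m)) : u = w := by
  have := hf.isLocalizedModule
  have := hg.isLocalizedModule
  have H : u.restrictScalars R = w.restrictScalars R :=
    IsLocalizedModule.linearMap_ext S f g (LinearMap.ext h)
  exact LinearMap.restrictScalars_injective R H

include hf hg in
theorem exists_lift_smul_of_free [IsScalarTower R A' N'] {n : ℕ} (π : (Fin n → A) →ₗ[A] M)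
    (u : M' →ₗ[A'] N') :
    ∃ (w : (Fin n → A) →ₗ[A] N) (s : S), ∀ c, g (w c) = s • u (f (π c)) := by
  have := hg.isLocalizedModule
  have := IsLocalizedModule.pi S fun _ : Fin n => g
  obtain ⟨⟨y, s⟩, hs⟩ := IsLocalizedModule.surj S
    (LinearMap.pi fun i => g ∘ₗ LinearMap.proj i) fun i : Fin n => u (f (π (Pi.single i 1)))
  refine ⟨Fintype.linearCombination A y, s, fun c => ?_⟩
  have hy (i : Fin n) : g (y i) = s • u (f (π (Pi.single i 1))) := (congrFun hs i).symm
  have hc : π c = ∑ i, c i • π (Pi.single i 1) := by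
    simp only [← map_smul, ← map_sum, ← Pi.single_smul, smul_eq_mul, mul_one,
      Finset.univ_sum_single]
  rw [Fintype.linearCombination_apply, hc]
  simp only [map_sum, hf.apply_smul, hg.apply_smul, map_smul, hy, Finset.smul_sum]
  exact Finset.sum_congr rfl fun i _ => smul_comm (φ (c i)) (s : R) _

include hf hg in
theorem exists_lift_smul [IsScalarTower R A N] [IsScalarTower R A' N']
    [Module.FinitePresentation A M] (u : M' →ₗ[A'] N') :
    ∃ (w : M →ₗ[A] N) (s : S), ∀ m, g (w m) = s • u (f m) := by
  obtain ⟨n, K, e, hK⟩ := Module.FinitePresentation.exists_fin A M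
  obtain ⟨w, s, hw⟩ := hf.exists_lift_smul_of_free hg (e.symm.toLinearMap ∘ₗ K.mkQ) u
  have := hg.isLocalizedModule
  have := Module.Finite.iff_fg.2 hK
  -- `w` need not vanish on the relations `K`, but the finitely many generators of `K` share a
  -- multiplier `t ∈ S` killing their images, since those images vanish in `N'`.
  obtain ⟨t, ht⟩ := exists_smul_eq_zero_of_forall_apply_eq_zero S g (w ∘ₗ K.subtype) fun x => by
    simp [hw, (Submodule.Quotient.mk_eq_zero K).2 x.2]
  let w' : M →ₗ[A] N :=
    K.liftQ (t • w) (fun x hx => LinearMap.congr_fun ht ⟨x, hx⟩) ∘ₗ e.toLinearMap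
  refine ⟨w', t * s, fun m => ?_⟩
  obtain ⟨c, rfl⟩ := e.symm.surjective m
  obtain ⟨c, rfl⟩ := K.mkQ_surjective c
  calc g (w' (e.symm (K.mkQ c))) = g ((t : R) • w c) := by simp [w', Submonoid.smul_def]
    _ = (t * s) • u (f (e.symm (K.mkQ c))) := by
      rw [map_smul, hw, mul_smul]
      rfl

variable [IsScalarTower R A' M'] [IsScalarTower R A' N'] [IsLocalizedModule S φ.toLinearMap]

include hf hg in
theorem map_smul_of_apply_eq {v : M →ₗ[A] N} {u : M' →ₗ[R] N'}
    (h : ∀ m, u (f m) = g (v m)) (a : A') (x : M') : u (a • x) = a • u x := by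
  have := hf.isLocalizedModule
  have := hg.isLocalizedModule
  have map_smul_image (a : A) (x : M') : u (φ a • x) = φ a • u x :=
    LinearMap.congr_fun (IsLocalizedModule.linearMap_ext S f g
      (g := u ∘ₗ Algebra.lsmul R R M' (φ a)) (g' := Algebra.lsmul R R N' (φ a) ∘ₗ u)
      (LinearMap.ext fun m => by simp [← hf.apply_smul, ← hg.apply_smul, h])) x
  exact LinearMap.congr_fun (IsLocalizedModule.linearMap_ext S φ.toLinearMap g
    (g := u ∘ₗ (LinearMap.toSpanSingleton A' M' x).restrictScalars R)
    (g' := (LinearMap.toSpanSingleton A' N' (u x)).restrictScalars R)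
    (LinearMap.ext fun a => by simpa using map_smul_image a x)) a

variable [IsScalarTower R A M] [IsScalarTower R A N]

/-- The `R`-linear map `Hom_A(M, N) → Hom_A'(M', N')` sending `v` to its localization. -/
noncomputable def homMap : (M →ₗ[A] N) →ₗ[R] (M' →ₗ[A'] N') where
  toFun v :=
    have := hf.isLocalizedModule
    have := hg.isLocalizedModule
    { IsLocalizedModule.map S f g (v.restrictScalars R) with
      map_smul' := hf.map_smul_of_apply_eq hg (v := v) fun m => by simp }
  map_add' v w := hf.linearMap_ext hg fun m => by
    have := hf.isLocalizedModule
    have := hg.isLocalizedModule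
    simp
  map_smul' r v := hf.linearMap_ext hg fun m => by
    have := hf.isLocalizedModule
    have := hg.isLocalizedModule
    simp

@[simp]
theorem homMap_apply_apply (v : M →ₗ[A] N) (m : M) : hf.homMap hg v (f m) = g (v m) :=
  have := hf.isLocalizedModule
  have := hg.isLocalizedModule
  IsLocalizedModule.map_apply S f g (v.restrictScalars R) m

theorem homMap_surjective {v : M →ₗ[A] N} (hv : Function.Surjective v) :
    Function.Surjective (hf.homMap hg v) :=
  have := hf.isLocalizedModule
  have := hg.isLocalizedModule
  IsLocalizedModule.map_surjective S f g (v.restrictScalars R) hv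

theorem homMap_isLocalizedModule [Module.FinitePresentation A M] :
    IsLocalizedModule S (hf.homMap hg) where
  map_units s := isUnit_algebraMap_end_linearMap (hg.isLocalizedModule.map_units s)
  surj u := by
    obtain ⟨w, s, hw⟩ := hf.exists_lift_smul hg u
    exact ⟨⟨w, s⟩, hf.linearMap_ext hg fun m => by simp [hw]⟩
  exists_of_eq {v w} h := by
    have := hg.isLocalizedModule
    obtain ⟨s, hs⟩ := exists_smul_eq_zero_of_forall_apply_eq_zero S g (v - w) fun m => by
      rw [LinearMap.sub_apply, map_sub, ← homMap_apply_apply hf hg, h, homMap_apply_apply, sub_self]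
    exact ⟨s, by rwa [smul_sub, sub_eq_zero] at hs⟩

end IsLocalizedModuleAlong

end Localization

section LocalGlobal

variable {R M N : Type*} [CommRing R] [AddCommGroup M] [Module R M] [AddCommGroup N] [Module R N]
  {M' N' : PrimeSpectrum R → Type*} [∀ p, AddCommGroup (M' p)] [∀ p, Module R (M' p)]
  [∀ p, AddCommGroup (N' p)] [∀ p, Module R (N' p)]
  {f : ∀ p, M →ₗ[R] M' p} [hf : ∀ p, IsLocalizedModule p.asIdeal.primeCompl (f p)]
  {g : ∀ p, N →ₗ[R] N' p} [hg : ∀ p, IsLocalizedModule p.asIdeal.primeCompl (g p)]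
  {F : M →ₗ[R] N} {F' : ∀ p, M' p →ₗ[R] N' p} (h : ∀ p m, F' p (f p m) = g p (F m))
include h

theorem eq_isLocalizedModule_map (p : PrimeSpectrum R) :
    F' p = IsLocalizedModule.map p.asIdeal.primeCompl (f p) (g p) F :=
  IsLocalizedModule.linearMap_ext p.asIdeal.primeCompl (f p) (g p)
    (LinearMap.ext fun m => by simp [h])

theorem injective_iff_forall_prime :
    Function.Injective F ↔ ∀ p, Function.Injective (F' p) := by
  simp only [eq_isLocalizedModule_map h]
  refine ⟨fun hF p => IsLocalizedModule.map_injective p.asIdeal.primeCompl (f p) (g p) F hF,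
    fun hF => ?_⟩
  let prime (P : Ideal R) [P.IsMaximal] : PrimeSpectrum R := ⟨P, inferInstance⟩
  -- Instance search cannot find the `IsMaximal` arguments, which occur only inside proofs.
  exact @injective_of_isLocalized_maximal _ _ _ _ _ _ _ _
    (fun P _ => M' (prime P)) _ _ (fun P _ => f (prime P)) (fun P _ => hf (prime P))
    (fun P _ => N' (prime P)) _ _ (fun P _ => g (prime P)) (fun P _ => hg (prime P))
    F fun P _ => hF (prime P)

theorem surjective_iff_forall_prime :
    Function.Surjective F ↔ ∀ p, Function.Surjective (F' p) := by
  simp only [eq_isLocalizedModule_map h]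
  refine ⟨fun hF p => IsLocalizedModule.map_surjective p.asIdeal.primeCompl (f p) (g p) F hF,
    fun hF => ?_⟩
  let prime (P : Ideal R) [P.IsMaximal] : PrimeSpectrum R := ⟨P, inferInstance⟩
  exact @surjective_of_isLocalized_maximal _ _ _ _ _ _ _ _
    (fun P _ => M' (prime P)) _ _ (fun P _ => f (prime P)) (fun P _ => hf (prime P))
    (fun P _ => N' (prime P)) _ _ (fun P _ => g (prime P)) (fun P _ => hg (prime P))
    F fun P _ => hF (prime P)

theorem bijective_iff_forall_prime :
    Function.Bijective F ↔ ∀ p, Function.Bijective (F' p) := by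
  simp only [Function.Bijective, forall_and, injective_iff_forall_prime h,
    surjective_iff_forall_prime h]

end LocalGlobal

section ExtLocalGlobal

variable {R : Type*} {A : Type} [CommRing R] [Ring A] [Algebra R A]
  {A' : PrimeSpectrum R → Type} [∀ p, Ring (A' p)] [∀ p, Algebra R (A' p)]
  {φ : ∀ p, A →ₐ[R] A' p} [∀ p, IsLocalizedModule p.asIdeal.primeCompl (φ p).toLinearMap]
  {M : Type} [AddCommGroup M] [Module R M] [Module A M] [IsScalarTower R A M]
  {M' : PrimeSpectrum R → Type} [∀ p, AddCommGroup (M' p)] [∀ p, Module R (M' p)]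
  [∀ p, Module (A' p) (M' p)] [∀ p, IsScalarTower R (A' p) (M' p)]
  {f : ∀ p, M →ₗ[R] M' p} (hf : ∀ p, IsLocalizedModuleAlong p.asIdeal.primeCompl (φ p) (f p))
include hf

theorem exists_localized_free_cover [Module.Finite A M] : ∃ (n : ℕ) (ε : (Fin n → A) →ₗ[A] M)
    (ε' : ∀ p, (Fin n → A' p) →ₗ[A' p] M' p), Function.Surjective ε ∧
      (∀ p, Function.Surjective (ε' p)) ∧
      ∀ p x, ε' p ((φ p).toLinearMap.compLeft (Fin n) x) = f p (ε x) := by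
  obtain ⟨n, ε, hε⟩ := Module.Finite.exists_fin' A M
  have hφ p := (isLocalizedModuleAlong_self p.asIdeal.primeCompl (φ p)).compLeft (Fin n)
  exact ⟨n, ε, fun p => (hφ p).homMap (hf p) ε, hε, fun p => (hφ p).homMap_surjective (hf p) hε,
    fun p => (hφ p).homMap_apply_apply (hf p) ε⟩

variable {N : Type} [AddCommGroup N] [Module R N] [Module A N] [IsScalarTower R A N]
  {N' : PrimeSpectrum R → Type} [∀ p, AddCommGroup (N' p)] [∀ p, Module R (N' p)]
  [∀ p, Module (A' p) (N' p)] [∀ p, IsScalarTower R (A' p) (N' p)]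
  {g : ∀ p, N →ₗ[R] N' p} (hg : ∀ p, IsLocalizedModuleAlong p.asIdeal.primeCompl (φ p) (g p))
include hg

theorem surjective_precomp_iff_forall_prime [Module.FinitePresentation A M]
    {K : Type} [AddCommGroup K] [Module R K] [Module A K] [IsScalarTower R A K]
    [Module.FinitePresentation A K] {K' : PrimeSpectrum R → Type}
    [∀ p, AddCommGroup (K' p)] [∀ p, Module R (K' p)] [∀ p, Module (A' p) (K' p)]
    [∀ p, IsScalarTower R (A' p) (K' p)] {k : ∀ p, K →ₗ[R] K' p}
    (hk : ∀ p, IsLocalizedModuleAlong p.asIdeal.primeCompl (φ p) (k p))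
    {v : K →ₗ[A] M} {v' : ∀ p, K' p →ₗ[A' p] M' p} (hv : ∀ p x, v' p (k p x) = f p (v x)) :
    Function.Surjective (fun w : M →ₗ[A] N => w ∘ₗ v) ↔
      ∀ p, Function.Surjective fun w : M' p →ₗ[A' p] N' p => w ∘ₗ v' p := by
  have hM p := (hf p).homMap_isLocalizedModule (hg p)
  have hK p := (hk p).homMap_isLocalizedModule (hg p)
  exact surjective_iff_forall_prime (f := fun p => (hf p).homMap (hg p))
    (g := fun p => (hk p).homMap (hg p)) (F := LinearMap.lcomp R N v)
    (F' := fun p => LinearMap.lcomp R (N' p) (v' p))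
    fun p w => (hk p).linearMap_ext (hg p) fun x => by simp [hv]

theorem extVan_succ_iff_forall_prime [IsNoetherianRing A] [Module.Finite A M] (i : ℕ) :
    extVan A M N (i + 1) ↔ ∀ p, extVan (A' p) (M' p) (N' p) (i + 1) := by
  induction i generalizing M M' with
  | zero =>
    obtain ⟨n, ε, ε', hε, hε', h⟩ := exists_localized_free_cover hf
    have hφ p := (isLocalizedModuleAlong_self p.asIdeal.primeCompl (φ p)).compLeft (Fin n)
    simp only [zero_add, extVan_one_iff_surjective hε, extVan_one_iff_surjective (hε' _)]
    have := Module.finitePresentation_of_finite A M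
    have := Module.finitePresentation_of_finite A (LinearMap.ker ε)
    exact surjective_precomp_iff_forall_prime hφ hg
      (fun p => isLocalizedModuleAlong_kerMap (h p) (hφ p) (hf p)) fun _ _ => rfl
  | succ i ih =>
    obtain ⟨n, ε, ε', hε, hε', h⟩ := exists_localized_free_cover hf
    have hφ p := (isLocalizedModuleAlong_self p.asIdeal.primeCompl (φ p)).compLeft (Fin n)
    simp only [add_assoc, one_add_one_eq_two, extVan_add_two_iff hε, extVan_add_two_iff (hε' _)]
    exact ih fun p => isLocalizedModuleAlong_kerMap (h p) (hφ p) (hf p)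

end ExtLocalGlobal

section TotallyReflexive

theorem isNoetherian_mulOpposite_self (A : Type*) [Ring A] [IsNoetherianRing Aᵐᵒᵖ] :
    IsNoetherian Aᵐᵒᵖ A :=
  isNoetherian_of_surjective (LinearMap.toSpanSingleton Aᵐᵒᵖ A 1)
    (LinearMap.range_eq_top.2 fun a => ⟨.op a, by simp⟩)

theorem finite_linearMap_self (A M : Type) [Ring A] [IsNoetherianRing Aᵐᵒᵖ] [AddCommGroup M]
    [Module A M] [Module.Finite A M] : Module.Finite Aᵐᵒᵖ (M →ₗ[A] A) := by
  obtain ⟨n, ε, hε⟩ := Module.Finite.exists_fin' A M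
  have := isNoetherian_mulOpposite_self A
  refine Module.Finite.of_injective
    (LinearMap.pi fun i : Fin n => evalBidual A M (ε (Pi.single i 1))) fun u w h => ?_
  exact (LinearMap.cancel_right hε).1 <|
    LinearMap.pi_ext' fun i => LinearMap.ext_ring (congrFun h i)

theorem isTotallyReflexive_iff_succ (A M : Type) [Ring A] [AddCommGroup M] [Module A M] :
    IsTotallyReflexive A M ↔ (∀ i, extVan A M A (i + 1)) ∧
      (∀ i, extVan Aᵐᵒᵖ (M →ₗ[A] A) A (i + 1)) ∧ Function.Bijective (evalBidual A M) := by
  have forall_pos_iff (Q : ℕ → Prop) : (∀ i > 0, Q i) ↔ ∀ i, Q (i + 1) := by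
    rw [← Nat.and_forall_add_one]
    simp
  rw [IsTotallyReflexive, forall_pos_iff, forall_pos_iff]

variable {R A : Type*} [CommRing R] [Ring A] [Algebra R A]
  {A' : Type*} [Ring A'] [Algebra R A'] {S : Submonoid R}
  {φ : A →ₐ[R] A'} [IsLocalizedModule S φ.toLinearMap]
  {M : Type*} [AddCommGroup M] [Module R M] [Module A M] [IsScalarTower R A M]
  {M' : Type*} [AddCommGroup M'] [Module R M'] [Module A' M'] [IsScalarTower R A' M']
  {f : M →ₗ[R] M'} (hf : IsLocalizedModuleAlong S φ f)

/-- The localization map `Hom_A(M, A) → Hom_A'(M', A')` of dual modules. -/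
noncomputable def dualMap : (M →ₗ[A] A) →ₗ[R] (M' →ₗ[A'] A') :=
  hf.homMap (isLocalizedModuleAlong_self S φ)

theorem isLocalizedModuleAlong_dualMap [Module.FinitePresentation A M] :
    IsLocalizedModuleAlong S (AlgHom.op φ) (dualMap hf) where
  isLocalizedModule := hf.homMap_isLocalizedModule _
  apply_smul a u := hf.linearMap_ext (isLocalizedModuleAlong_self S φ) fun m => by
    simp [dualMap]

end TotallyReflexive

section TotallyReflexiveLocalGlobal

variable {R : Type*} {A : Type} [CommRing R] [Ring A] [Algebra R A] [IsNoetherianRing A]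
  [IsNoetherianRing Aᵐᵒᵖ]
  {A' : PrimeSpectrum R → Type} [∀ p, Ring (A' p)] [∀ p, Algebra R (A' p)]
  {φ : ∀ p, A →ₐ[R] A' p} [∀ p, IsLocalizedModule p.asIdeal.primeCompl (φ p).toLinearMap]
  {M : Type} [AddCommGroup M] [Module R M] [Module A M] [IsScalarTower R A M] [Module.Finite A M]
  {M' : PrimeSpectrum R → Type} [∀ p, AddCommGroup (M' p)] [∀ p, Module R (M' p)]
  [∀ p, Module (A' p) (M' p)] [∀ p, IsScalarTower R (A' p) (M' p)]
  {f : ∀ p, M →ₗ[R] M' p} (hf : ∀ p, IsLocalizedModuleAlong p.asIdeal.primeCompl (φ p) (f p))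
include hf

theorem evalBidual_bijective_iff_forall_prime :
    Function.Bijective (evalBidual A M) ↔ ∀ p, Function.Bijective (evalBidual (A' p) (M' p)) := by
  have := Module.finitePresentation_of_finite A M
  have := finite_linearMap_self A M
  have := Module.finitePresentation_of_finite Aᵐᵒᵖ (M →ₗ[A] A)
  have hdual p := isLocalizedModuleAlong_dualMap (hf p)
  have hself p := isLocalizedModuleAlong_op_self p.asIdeal.primeCompl (φ p)
  have hM p := (hf p).isLocalizedModule
  have hbidual p := (hdual p).homMap_isLocalizedModule (hself p)
  exact bijective_iff_forall_prime (f := f) (g := fun p => (hdual p).homMap (hself p))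
    (F := (evalBidual A M).restrictScalars R)
    (F' := fun p => (evalBidual (A' p) (M' p)).restrictScalars R)
    fun p m => (hdual p).linearMap_ext (hself p) fun u => by
      simp [evalBidual, dualMap]

theorem isTotallyReflexive_iff_forall_prime :
    IsTotallyReflexive A M ↔ ∀ p, IsTotallyReflexive (A' p) (M' p) := by
  have := Module.finitePresentation_of_finite A M
  have := finite_linearMap_self A M
  have hself p := isLocalizedModuleAlong_self p.asIdeal.primeCompl (φ p)
  have hself' p := isLocalizedModuleAlong_op_self p.asIdeal.primeCompl (φ p)
  have hdual p := isLocalizedModuleAlong_dualMap (hf p)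
  simp only [isTotallyReflexive_iff_succ, forall_and, extVan_succ_iff_forall_prime hf hself,
    extVan_succ_iff_forall_prime hdual hself', evalBidual_bijective_iff_forall_prime hf]
  exact and_congr forall_comm (and_congr_left' forall_comm)

end TotallyReflexiveLocalGlobal

section AtPrime

open TensorProduct

variable (R : Type) [CommRing R] (A : Type) [Ring A] [Algebra R A] (p : Ideal R) [p.IsPrime]
  (M : Type) [AddCommGroup M] [Module A M] [Module R M] [IsScalarTower R A M] [SMulCommClass R A M]

instance isScalarTower_locModule :
    IsScalarTower R (Localization.AtPrime p ⊗[R] A) (Localization.AtPrime p ⊗[R] M) := by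
  refine @IsScalarTower.of_algebraMap_smul _ _ _ _ _ _ (locModule R A p M).toMulAction _
    fun r x => ?_
  change algebraMap R (Localization.AtPrime p) r • (1 : A) • x = r • x
  rw [one_smul, algebraMap_smul]

instance isLocalizedModule_includeRight : IsLocalizedModule p.primeCompl
    (Algebra.TensorProduct.includeRight : A →ₐ[R] Localization.AtPrime p ⊗[R] A).toLinearMap :=
  inferInstanceAs
    (IsLocalizedModule p.primeCompl (TensorProduct.mk R (Localization.AtPrime p) A 1))

theorem isLocalizedModuleAlong_mk :
    IsLocalizedModuleAlong p.primeCompl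
      (Algebra.TensorProduct.includeRight : A →ₐ[R] Localization.AtPrime p ⊗[R] A)
      (TensorProduct.mk R (Localization.AtPrime p) M 1) where
  isLocalizedModule := inferInstance
  apply_smul a m := (one_smul (Localization.AtPrime p) (1 ⊗ₜ[R] (a • m))).symm

end AtPrime

open TensorProduct in
theorem totallyReflexive_local_general
    (R : Type) [CommRing R]
    (A : Type) [Ring A] [Algebra R A] [IsNoetherianRing A] [IsNoetherianRing Aᵐᵒᵖ]
    (M : Type) [AddCommGroup M] [Module A M] [Module.Finite A M]
    [Module R M] [IsScalarTower R A M] [SMulCommClass R A M] :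
    IsTotallyReflexive A M ↔
      ∀ (p : Ideal R) (_ : p.IsPrime),
        IsTotallyReflexive (Localization.AtPrime p ⊗[R] A)
          (Localization.AtPrime p ⊗[R] M) :=
  (isTotallyReflexive_iff_forall_prime fun p : PrimeSpectrum R =>
    isLocalizedModuleAlong_mk R A p.asIdeal M).trans
    ⟨fun h p hp => h ⟨p, hp⟩, fun h p => h p.asIdeal p.isPrime⟩

open TensorProduct in
/-- let `R` be a commutative noetherian ring, `A` a finite `R`-algebra, and
`M` a finitely generated `A`-module.  Then `M` is Gorenstein projective (totally
reflexive) over `A` if and only if, for every prime ideal `p` of `R`, the localization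
`M_p = R_p ⊗_R M` is Gorenstein projective (totally reflexive) over
`A_p = R_p ⊗_R A`: the ascent direction says that if the evaluation map
`M_p → Hom_{(A_p)ᵒᵖ}(Hom_{A_p}(M_p, A_p), A_p)` is an isomorphism and the corresponding
`Ext`-vanishing holds for all primes `p`, then `M` is Gorenstein projective over `A`,
and the descent direction is the converse. -/
theorem totallyReflexive_local
    (R : Type) [CommRing R] [IsNoetherianRing R]
    (A : Type) [Ring A] [Algebra R A] [Module.Finite R A]
    (M : Type) [AddCommGroup M] [Module A M] [Module.Finite A M]
    [Module R M] [IsScalarTower R A M] [SMulCommClass R A M] :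
    IsTotallyReflexive A M ↔
      ∀ (p : Ideal R) (_ : p.IsPrime),
        IsTotallyReflexive (Localization.AtPrime p ⊗[R] A)
          (Localization.AtPrime p ⊗[R] M) := by
  have : IsNoetherianRing A := isNoetherian_of_tower R inferInstance
  have : Module.Finite R Aᵐᵒᵖ := .equiv (MulOpposite.opLinearEquiv R)
  have : IsNoetherianRing Aᵐᵒᵖ := isNoetherian_of_tower R inferInstance
  exact totallyReflexive_local_general R A M
end

section
/- Let R be a commutative noetherian ring, A a finite R-algebra, and M a finitely generated A-module. Then M is projective over A if and only if M_m is projective over A_m for every maximal ideal m of R. -/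
/-!
Let `S ⊆ R` be a multiplicative set and regard localized modules as `A`-modules, so that everything
is about `A`-linear maps. If `M` is finitely presented over `A`, then every `A`-linear map
`M → S⁻¹N` becomes, after multiplication by an element of `S`, the composite of an `A`-linear map
`M → N` with `N → S⁻¹N`: this is clear for finite free `M`, and a finite presentation reduces to
that case. Applied to a section of the localization of a surjection `f : Aⁿ → M` at a maximal ideal,
this shows that the ideal of those `r : R` for which `r • id` factors through `f` is contained in no
maximal ideal; hence `f` splits. Conversely, projectivity passes to localizations because `S⁻¹M`
represents the `A`-linear maps from `M` to `S⁻¹A`-modules.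
-/

section CommonDenominators

variable {R : Type*} [CommRing R] (S : Submonoid R) {A : Type*} [Ring A] [Algebra R A]
  {M : Type*} [AddCommGroup M] [Module A M]
  {N : Type*} [AddCommGroup N] [Module R N] [Module A N] [IsScalarTower R A N]
  {Nₛ : Type*} [AddCommGroup Nₛ] [Module R Nₛ] [Module A Nₛ] [IsScalarTower R A Nₛ]
  (ℓ : N →ₗ[A] Nₛ)

instance isLocalizedModule_pi_restrictScalars {ι : Type*} [Finite ι]
    [IsLocalizedModule S (ℓ.restrictScalars R)] :
    IsLocalizedModule S
      ((LinearMap.pi fun i : ι ↦ ℓ ∘ₗ LinearMap.proj i : (ι → N) →ₗ[A] ι → Nₛ).restrictScalars R) :=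
  IsLocalizedModule.pi S fun _ : ι ↦ ℓ.restrictScalars R

variable [IsLocalizedModule S (ℓ.restrictScalars R)]

theorem exists_smul_eq_zero_of_comp_eq_zero [Module.Finite A M] (g : M →ₗ[A] N)
    (hg : ℓ ∘ₗ g = 0) : ∃ s : S, s • g = 0 := by
  obtain ⟨n, π, hπ⟩ := Module.Finite.exists_fin' A M
  let images : Fin n → N := fun i ↦ g (π (Pi.single i 1))
  have images_localized :
      LinearMap.pi (fun i ↦ ℓ.restrictScalars R ∘ₗ LinearMap.proj i) images = 0 :=
    funext fun i ↦ LinearMap.congr_fun hg _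
  obtain ⟨s, hs⟩ := (IsLocalizedModule.eq_zero_iff S _).mp images_localized
  refine ⟨s, (LinearMap.cancel_right hπ).mp <| LinearMap.pi_ext' fun i ↦ LinearMap.ext_ring ?_⟩
  exact congrFun hs i

theorem exists_comp_eq_smul_of_pi {ι : Type*} [Finite ι] (g : (ι → A) →ₗ[A] Nₛ) :
    ∃ (s : S) (h : (ι → A) →ₗ[A] N), ℓ ∘ₗ h = s • g := by
  obtain ⟨⟨y, s⟩, hy⟩ := IsLocalizedModule.surj S
    (LinearMap.pi fun i : ι ↦ ℓ.restrictScalars R ∘ₗ LinearMap.proj i)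
    fun i ↦ g (Pi.basisFun A ι i)
  refine ⟨s, (Pi.basisFun A ι).constr ℕ y, (Pi.basisFun A ι).ext fun i ↦ ?_⟩
  rw [LinearMap.comp_apply, Module.Basis.constr_basis]
  exact (congrFun hy i).symm

theorem exists_comp_eq_smul [Module.FinitePresentation A M] (g : M →ₗ[A] Nₛ) :
    ∃ (s : S) (h : M →ₗ[A] N), ℓ ∘ₗ h = s • g := by
  obtain ⟨n, m, π, relations, hπ, hexact⟩ := Module.FinitePresentation.exists_fin' A M
  obtain ⟨s, h₀, hh₀⟩ := exists_comp_eq_smul_of_pi S ℓ (g ∘ₗ π)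
  have localized_relations : ℓ ∘ₗ (h₀ ∘ₗ relations) = 0 := by
    rw [← LinearMap.comp_assoc, hh₀, LinearMap.smul_comp, LinearMap.comp_assoc,
      hexact.linearMap_comp_eq_zero, LinearMap.comp_zero, smul_zero]
  obtain ⟨t, ht⟩ := exists_smul_eq_zero_of_comp_eq_zero S ℓ _ localized_relations
  obtain ⟨h, hh⟩ : ∃ h : M →ₗ[A] N, h ∘ₗ π = t • h₀ :=
    ⟨(LinearMap.range relations).liftQ (t • h₀) (LinearMap.range_le_ker_iff.mpr ht) ∘ₗ
      (hexact.linearEquivOfSurjective hπ).symm.toLinearMap, by ext; simp⟩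
  refine ⟨t * s, h, (LinearMap.cancel_right hπ).mp ?_⟩
  calc (ℓ ∘ₗ h) ∘ₗ π = ℓ ∘ₗ (t • h₀) := by rw [LinearMap.comp_assoc, hh]
    _ = t • (ℓ ∘ₗ h₀) := ℓ.comp_smul t h₀
    _ = ((t * s) • g) ∘ₗ π := by rw [hh₀, smul_smul, LinearMap.smul_comp]

end CommonDenominators

section LocalizedAlgebra

variable {R : Type*} [CommRing R] (S : Submonoid R) {A : Type*} [Ring A] [Algebra R A]
  {Aₛ : Type*} [Ring Aₛ] [Algebra R Aₛ] [Module A Aₛ] [IsScalarTower R A Aₛ]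

variable (A Aₛ) in
/-- The ring `Aₛ` is the localization of the not necessarily commutative `R`-algebra `A` at the
multiplicative set `S` of `R`. The structure map `A → Aₛ` is encoded by the action of `A` on `Aₛ`,
as `a ↦ a • 1`, which is multiplicative when `IsScalarTower A Aₛ Aₛ` holds. -/
abbrev IsLocalizedAlgebra : Prop :=
  IsLocalizedModule S ((LinearMap.toSpanSingleton A Aₛ 1).restrictScalars R)

variable (A) in
theorem isUnit_algebraMap_of_isLocalizedAlgebra [IsLocalizedAlgebra S A Aₛ] (s : S) :
    IsUnit (algebraMap R Aₛ s) := by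
  rw [← Algebra.lmul_isUnit_iff (R := R), AlgHom.commutes]
  exact IsLocalizedModule.map_units ((LinearMap.toSpanSingleton A Aₛ 1).restrictScalars R) s

variable {P : Type*} [AddCommGroup P] [Module A P] [Module Aₛ P] [IsScalarTower A Aₛ P]
  {Q : Type*} [AddCommGroup Q] [Module A Q] [Module Aₛ Q] [IsScalarTower A Aₛ Q]

/-- Every `A`-linear map between `S⁻¹A`-modules, regarded as an `S⁻¹A`-linear map. -/
def extendScalarsOfIsLocalizedAlgebra [IsLocalizedAlgebra S A Aₛ] (g : P →ₗ[A] Q) :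
    P →ₗ[Aₛ] Q where
  __ := g
  map_smul' b x := by
    obtain ⟨⟨a, s⟩, hab⟩ := IsLocalizedModule.surj S
      ((LinearMap.toSpanSingleton A Aₛ 1).restrictScalars R) b
    have hs : algebraMap R Aₛ s = algebraMap R A s • (1 : Aₛ) := by
      rw [algebraMap_smul, Algebra.algebraMap_eq_smul_one]
    replace hab : algebraMap R A s • b = a • (1 : Aₛ) := (algebraMap_smul A (s : R) b).trans hab
    have unit : IsUnit (algebraMap R Aₛ s) := isUnit_algebraMap_of_isLocalizedAlgebra S A s
    apply unit.smul_left_cancel.mp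
    calc algebraMap R Aₛ s • g (b • x)
      _ = g (algebraMap R A s • b • x) := by rw [hs, smul_assoc, one_smul, map_smul g]
      _ = g (a • x) := by rw [← smul_assoc, hab, smul_assoc, one_smul]
      _ = (algebraMap R A s • b) • g x := by rw [map_smul, hab, smul_assoc, one_smul]
      _ = algebraMap R Aₛ s • b • g x := by rw [hs, smul_assoc, smul_assoc, one_smul]

variable [Module R Q] [IsScalarTower R A Q]

variable (A Aₛ Q) in
theorem isUnit_algebraMap_end_of_isLocalizedAlgebra [IsLocalizedAlgebra S A Aₛ] (s : S) :
    IsUnit (algebraMap R (Module.End R Q) s) := by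
  have : IsScalarTower R Aₛ Q := .to₁₃₄ R A Aₛ Q
  rw [← (Algebra.lsmul R R Q : Aₛ →ₐ[R] Module.End R Q).commutes]
  exact (isUnit_algebraMap_of_isLocalizedAlgebra S A s).map _

variable {M : Type*} [AddCommGroup M] [Module R M] [Module A M] [IsScalarTower R A M]
  {Mₛ : Type*} [AddCommGroup Mₛ] [Module R Mₛ] [Module A Mₛ] [IsScalarTower R A Mₛ]
  [Module Aₛ Mₛ] [IsScalarTower A Aₛ Mₛ] (ℓ : M →ₗ[A] Mₛ)

variable (Aₛ) in
theorem exists_linearMap_extending_of_isLocalizedAlgebra [IsLocalizedAlgebra S A Aₛ]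
    [IsLocalizedModule S (ℓ.restrictScalars R)] (g : M →ₗ[A] Q) :
    ∃ G : Mₛ →ₗ[Aₛ] Q, G.restrictScalars A ∘ₗ ℓ = g := by
  have units := isUnit_algebraMap_end_of_isLocalizedAlgebra S A Aₛ Q
  let G := IsLocalizedModule.lift S (ℓ.restrictScalars R) (g.restrictScalars R) units
  have G_apply (x : M) : G (ℓ x) = g x := IsLocalizedModule.lift_apply S _ _ units x
  have G_smul (a : A) : G ∘ₗ Algebra.lsmul R R Mₛ a = Algebra.lsmul R R Q a ∘ₗ G := by
    refine IsLocalizedModule.ext S (ℓ.restrictScalars R) units (LinearMap.ext fun x ↦ ?_)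
    change G (a • ℓ x) = a • G (ℓ x)
    rw [← map_smul, G_apply, G_apply, map_smul]
  exact ⟨extendScalarsOfIsLocalizedAlgebra S
    { G with map_smul' := fun a ↦ LinearMap.congr_fun (G_smul a) }, LinearMap.ext G_apply⟩

variable (Aₛ) in
theorem projective_of_isLocalizedAlgebra [IsScalarTower A Aₛ Aₛ] [IsLocalizedAlgebra S A Aₛ]
    [IsLocalizedModule S (ℓ.restrictScalars R)] [Module.Projective A M] :
    Module.Projective Aₛ Mₛ := by
  refine .of_lifting_property'' fun f hf ↦ ?_
  obtain ⟨g, hg⟩ := Module.projective_lifting_property (f.restrictScalars A) ℓ hf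
  obtain ⟨G, hG⟩ := exists_linearMap_extending_of_isLocalizedAlgebra S Aₛ ℓ g
  have fG_comp_ℓ : f.restrictScalars A ∘ₗ G.restrictScalars A ∘ₗ ℓ = ℓ := by rw [hG, hg]
  have fG_eq_id := IsLocalizedModule.linearMap_ext S (ℓ.restrictScalars R) (ℓ.restrictScalars R)
    (g := ((f ∘ₗ G).restrictScalars A).restrictScalars R) (g' := LinearMap.id)
    (congrArg (LinearMap.restrictScalars R) fG_comp_ℓ)
  exact ⟨G, LinearMap.restrictScalars_injective A (LinearMap.restrictScalars_injective R fG_eq_id)⟩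

variable {N : Type*} [AddCommGroup N] [Module R N] [Module A N] [IsScalarTower R A N]
  {Nₛ : Type*} [AddCommGroup Nₛ] [Module R Nₛ] [Module A Nₛ] [IsScalarTower R A Nₛ]
  [Module Aₛ Nₛ] [IsScalarTower A Aₛ Nₛ] (ℓN : N →ₗ[A] Nₛ)

variable (Aₛ) in
theorem exists_surjective_extending_of_isLocalizedAlgebra [IsLocalizedAlgebra S A Aₛ]
    [IsLocalizedModule S (ℓ.restrictScalars R)] [IsLocalizedModule S (ℓN.restrictScalars R)]
    {f : N →ₗ[A] M} (hf : Function.Surjective f) :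
    ∃ F : Nₛ →ₗ[Aₛ] Mₛ, Function.Surjective F ∧ F.restrictScalars A ∘ₗ ℓN = ℓ ∘ₗ f := by
  obtain ⟨F, hF⟩ := exists_linearMap_extending_of_isLocalizedAlgebra S Aₛ ℓN (ℓ ∘ₗ f)
  have hF_map : (F.restrictScalars A).restrictScalars R =
      IsLocalizedModule.map S (ℓN.restrictScalars R) (ℓ.restrictScalars R) (f.restrictScalars R) :=
    IsLocalizedModule.linearMap_ext S (ℓN.restrictScalars R) (ℓ.restrictScalars R) <| by
      rw [IsLocalizedModule.map_comp]
      exact congrArg (LinearMap.restrictScalars R) hF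
  refine ⟨F, ?_, hF⟩
  have := IsLocalizedModule.map_surjective S (ℓN.restrictScalars R) (ℓ.restrictScalars R)
    (f.restrictScalars R) hf
  rwa [← hF_map] at this

variable (Aₛ) in
theorem exists_comp_eq_smul_id_of_projective_localization [IsLocalizedAlgebra S A Aₛ]
    [IsLocalizedModule S (ℓ.restrictScalars R)] [IsLocalizedModule S (ℓN.restrictScalars R)]
    [Module.FinitePresentation A M] [Module.Projective Aₛ Mₛ]
    {f : N →ₗ[A] M} (hf : Function.Surjective f) :
    ∃ (s : S) (h : M →ₗ[A] N), f ∘ₗ h = s • LinearMap.id := by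
  obtain ⟨F, F_surjective, hF⟩ := exists_surjective_extending_of_isLocalizedAlgebra S Aₛ ℓ ℓN hf
  obtain ⟨G, hG⟩ := Module.projective_lifting_property F LinearMap.id F_surjective
  obtain ⟨s, h, hh⟩ := exists_comp_eq_smul S ℓN (G.restrictScalars A ∘ₗ ℓ)
  have localized_eq : ℓ ∘ₗ f ∘ₗ h = s • ℓ :=
    calc ℓ ∘ₗ f ∘ₗ h = F.restrictScalars A ∘ₗ ℓN ∘ₗ h := by
          rw [← LinearMap.comp_assoc, ← hF, LinearMap.comp_assoc]
      _ = s • ((F ∘ₗ G).restrictScalars A ∘ₗ ℓ) := by rw [hh, LinearMap.comp_smul]; rfl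
      _ = s • ℓ := by rw [hG]; rfl
  obtain ⟨t, ht⟩ := exists_smul_eq_zero_of_comp_eq_zero S ℓ (f ∘ₗ h - s • LinearMap.id) <| by
    rw [LinearMap.comp_sub, localized_eq, LinearMap.comp_smul, LinearMap.comp_id, sub_self]
  refine ⟨t * s, t • h, ?_⟩
  rw [LinearMap.comp_smul, mul_smul, ← sub_eq_zero, ← smul_sub, ht]

end LocalizedAlgebra

section Maximal

variable {R : Type*} [CommRing R]

theorem mem_of_forall_isMaximal_exists_smul_mem {M : Type*} [AddCommGroup M] [Module R M]
    {N : Submodule R M} {x : M}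
    (h : ∀ (m : Ideal R) [m.IsMaximal], ∃ s ∈ m.primeCompl, s • x ∈ N) : x ∈ N := by
  suffices N.colon {x} = ⊤ by
    simpa only [one_smul] using
      Submodule.mem_colon_singleton.mp ((Ideal.eq_top_iff_one _).mp this)
  by_contra hne
  obtain ⟨m, hm, colon_le⟩ := Ideal.exists_le_maximal _ hne
  obtain ⟨s, hs, hsx⟩ := h m
  exact hs (colon_le (Submodule.mem_colon_singleton.mpr hsx))

theorem projective_local_general {A : Type*} [Ring A] [Algebra R A]
    {M : Type*} [AddCommGroup M] [Module R M] [Module A M] [IsScalarTower R A M]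
    [Module.FinitePresentation A M]
    (Aₘ : ∀ (m : Ideal R) [m.IsMaximal], Type*)
    [∀ (m : Ideal R) [m.IsMaximal], Ring (Aₘ m)]
    [∀ (m : Ideal R) [m.IsMaximal], Algebra R (Aₘ m)]
    [∀ (m : Ideal R) [m.IsMaximal], Module A (Aₘ m)]
    [∀ (m : Ideal R) [m.IsMaximal], IsScalarTower R A (Aₘ m)]
    [∀ (m : Ideal R) [m.IsMaximal], IsScalarTower A (Aₘ m) (Aₘ m)]
    [∀ (m : Ideal R) [m.IsMaximal], IsLocalizedAlgebra m.primeCompl A (Aₘ m)]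
    {Mₘ : ∀ (m : Ideal R) [m.IsMaximal], Type*}
    [∀ (m : Ideal R) [m.IsMaximal], AddCommGroup (Mₘ m)]
    [∀ (m : Ideal R) [m.IsMaximal], Module R (Mₘ m)]
    [∀ (m : Ideal R) [m.IsMaximal], Module A (Mₘ m)]
    [∀ (m : Ideal R) [m.IsMaximal], IsScalarTower R A (Mₘ m)]
    [∀ (m : Ideal R) [m.IsMaximal], Module (Aₘ m) (Mₘ m)]
    [∀ (m : Ideal R) [m.IsMaximal], IsScalarTower A (Aₘ m) (Mₘ m)]
    (ℓ : ∀ (m : Ideal R) [m.IsMaximal], M →ₗ[A] Mₘ m)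
    [∀ (m : Ideal R) [m.IsMaximal],
      IsLocalizedModule m.primeCompl ((ℓ m).restrictScalars R)] :
    Module.Projective A M ↔ ∀ (m : Ideal R) [m.IsMaximal], Module.Projective (Aₘ m) (Mₘ m) := by
  refine ⟨fun _ m _ ↦ projective_of_isLocalizedAlgebra m.primeCompl (Aₘ m) (ℓ m),
    fun projective_localization ↦ ?_⟩
  obtain ⟨n, f, hf⟩ := Module.Finite.exists_fin' A M
  have id_mem : LinearMap.id ∈ LinearMap.range (f.compRight R (M := M)) := by
    refine mem_of_forall_isMaximal_exists_smul_mem fun m _ ↦ ?_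
    have := projective_localization m
    obtain ⟨s, h, hs⟩ := exists_comp_eq_smul_id_of_projective_localization m.primeCompl (Aₘ m)
      (ℓ m)
      (LinearMap.pi fun i ↦ LinearMap.toSpanSingleton A (Aₘ m) 1 ∘ₗ LinearMap.proj i) hf
    exact ⟨s, s.2, h, hs⟩
  obtain ⟨g, hg⟩ := id_mem
  exact .of_split g f hg

end Maximal

section AtPrime

open TensorProduct

variable {R : Type} [CommRing R] {A : Type} [Ring A] [Algebra R A] (p : Ideal R) [p.IsPrime]
  {M : Type} [AddCommGroup M] [Module A M] [Module R M] [IsScalarTower R A M] [SMulCommClass R A M]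

instance isScalarTower_locAModule_locModule :
    IsScalarTower A (Localization.AtPrime p ⊗[R] A) (Localization.AtPrime p ⊗[R] M) where
  smul_assoc a b y := by
    induction b using TensorProduct.induction_on with
    | zero =>
      have zero_smul_y : (0 : Localization.AtPrime p ⊗[R] A) • y = 0 :=
        (locModule R A p M).zero_smul y
      rw [smul_zero, zero_smul_y, smul_zero]
    | add b c hb hc => simp only [smul_add, add_smul, hb, hc]
    | tmul c b =>
      induction y using TensorProduct.induction_on with
      | zero => simp only [smul_zero]
      | add y z hy hz => simp only [smul_add, hy, hz]
      | tmul d x => exact congrArg ((c * d) ⊗ₜ[R] ·) (smul_assoc a b x)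

instance isScalarTower_locAModule_self :
    IsScalarTower A (Localization.AtPrime p ⊗[R] A) (Localization.AtPrime p ⊗[R] A) where
  smul_assoc a b c := by
    have smul_eq_mul_tmul (x : Localization.AtPrime p ⊗[R] A) : a • x = (1 ⊗ₜ[R] a) * x := by
      induction x using TensorProduct.induction_on with
      | zero => simp only [smul_zero, mul_zero]
      | add x y hx hy => simp only [smul_add, mul_add, hx, hy]
      | tmul d x =>
        rw [locA_smul_tmul, Algebra.TensorProduct.tmul_mul_tmul, one_mul, smul_eq_mul]
    rw [smul_eq_mul_tmul, smul_eq_mul_tmul, smul_eq_mul, smul_eq_mul, mul_assoc]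

variable (A M) in
/-- The canonical map `M → R_p ⊗_R M`, `x ↦ 1 ⊗ x`, as an `A`-linear map. -/
noncomputable def atPrimeMk : M →ₗ[A] Localization.AtPrime p ⊗[R] M where
  __ := TensorProduct.mk R (Localization.AtPrime p) M 1
  map_smul' _ _ := rfl

instance isLocalizedModule_atPrimeMk :
    IsLocalizedModule p.primeCompl ((atPrimeMk A p M).restrictScalars R) :=
  inferInstanceAs (IsLocalizedModule p.primeCompl (TensorProduct.mk R (Localization.AtPrime p) M 1))

instance isLocalizedAlgebra_atPrime :
    IsLocalizedAlgebra p.primeCompl A (Localization.AtPrime p ⊗[R] A) := by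
  have : LinearMap.toSpanSingleton A (Localization.AtPrime p ⊗[R] A) 1 = atPrimeMk A p A :=
    LinearMap.ext fun a ↦ congrArg (1 ⊗ₜ[R] ·) (mul_one a)
  rw [IsLocalizedAlgebra, this]
  infer_instance

end AtPrime

open TensorProduct in
/-- let `R` be a commutative noetherian ring, `A` a finite `R`-algebra, and
`M` a finitely generated `A`-module.  Then `M` is projective over `A` if and only if
`M_𝔪 = R_𝔪 ⊗_R M` is projective over `A_𝔪 = R_𝔪 ⊗_R A` for every maximal ideal `𝔪`
of `R`. -/
theorem projective_local
    (R : Type) [CommRing R] [IsNoetherianRing R]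
    (A : Type) [Ring A] [Algebra R A] [Module.Finite R A]
    (M : Type) [AddCommGroup M] [Module A M] [Module.Finite A M]
    [Module R M] [IsScalarTower R A M] [SMulCommClass R A M] :
    Module.Projective A M ↔
      ∀ (m : Ideal R) (_ : m.IsMaximal),
        Module.Projective (Localization.AtPrime m ⊗[R] A)
          (Localization.AtPrime m ⊗[R] M) := by
  have : IsNoetherianRing A := .of_finite R A
  have : Module.FinitePresentation A M := Module.finitePresentation_of_finite A M
  exact projective_local_general (fun m _ ↦ Localization.AtPrime m ⊗[R] A) fun m _ ↦ atPrimeMk A m M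
end
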